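/- arXiv:1004.0332 — 4 statements merged into one kernel-verified Lean document; each statement's English description precedes it below -/
import Mathlib

section
/- Let ω be a cut-off function. Then for Re z > 0 one has ∫_0^∞ r^{z−1} ω(r) dr = −z^{−1} ∫_0^∞ r^{z} ω'(r) dr, the right-hand side Φ(z) := −z^{−1} ∫_0^∞ r^{z} ω'(r) dr is meromorphic on all of ℂ (its only pole being a simple pole at z = 0), and for every N ∈ ℕ and all reals a ≤ b there is C > 0 such that |Φ(σ+iρ)| ≤ C |ρ|^{−N} for all σ ∈ [a,b] and all |ρ| ≥ 1. (This is the rapid decay of the Mellin transform of a cut-off function on vertical lines, uniformly on compact intervals of the real part, used in the construction of potentials of analytic functionals.) -/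
open MeasureTheory Set

open Filter Asymptotics Topology

/-- The Euler operator `f ↦ (r ↦ r f'(r))`. -/
noncomputable def eulerOp (f : ℝ → ℂ) (r : ℝ) : ℂ := r * deriv f r

theorem cpow_sub_one_mul_eulerOp (f : ℝ → ℂ) (s : ℂ) {r : ℝ} (hr : 0 < r) :
    (r : ℂ) ^ (s - 1) * eulerOp f r = (r : ℂ) ^ s * deriv f r := by
  have hr0 : (r : ℂ) ≠ 0 := Complex.ofReal_ne_zero.2 hr.ne'
  rw [eulerOp, ← mul_assoc, Complex.cpow_sub _ _ hr0, Complex.cpow_one, div_mul_cancel₀ _ hr0]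

theorem HasCompactSupport.eulerOp {f : ℝ → ℂ} (hf : HasCompactSupport f) :
    HasCompactSupport (eulerOp f) :=
  hf.deriv.mul_left (f := fun r : ℝ => (r : ℂ))

theorem ContDiff.eulerOp {f : ℝ → ℂ} (hf : ContDiff ℝ (⊤ : ℕ∞) f) :
    ContDiff ℝ (⊤ : ℕ∞) (eulerOp f) :=
  Complex.ofRealCLM.contDiff.mul (contDiff_infty_iff_deriv.1 hf).2

theorem ContDiff.continuous_eulerOp {f : ℝ → ℂ} (hf : ContDiff ℝ 1 f) :
    Continuous (_root_.eulerOp f) :=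
  Complex.continuous_ofReal.mul (hf.continuous_deriv le_rfl)

theorem eulerOp_eventuallyEq_zero {f : ℝ → ℂ} {x : ℝ} {c : ℂ} (hf : f =ᶠ[𝓝 x] fun _ => c) :
    eulerOp f =ᶠ[𝓝 x] 0 := by
  filter_upwards [hf.deriv] with r hr
  simp [eulerOp, hr]

theorem HasCompactSupport.eventuallyEq_zero_atTop {f : ℝ → ℂ} (hf : HasCompactSupport f) :
    f =ᶠ[atTop] 0 :=
  (hasCompactSupport_iff_eventuallyEq.1 hf).filter_mono
    (by rw [coclosedCompact_eq_cocompact]; exact atTop_le_cocompact)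

theorem HasCompactSupport.isBigO_atTop {f : ℝ → ℂ} {g : ℝ → ℝ} (hf : HasCompactSupport f) :
    f =O[atTop] g :=
  hf.eventuallyEq_zero_atTop.trans_isBigO (isBigO_zero _ _)

theorem isBigO_nhdsGT_of_eventuallyEq_zero {f : ℝ → ℂ} {g : ℝ → ℝ} {x : ℝ} (hf : f =ᶠ[𝓝 x] 0) :
    f =O[𝓝[>] x] g :=
  (hf.filter_mono nhdsWithin_le_nhds).trans_isBigO (isBigO_zero _ _)

theorem mellinConvergent_of_hasCompactSupport {f : ℝ → ℂ} (hf : Continuous f)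
    (hcs : HasCompactSupport f) {b : ℝ} (hb : f =O[𝓝[>] 0] (· ^ (-b))) {s : ℂ} (hs : b < s.re) :
    MellinConvergent f s :=
  mellinConvergent_of_isBigO_rpow (hf.locallyIntegrable.locallyIntegrableOn _)
    hcs.isBigO_atTop (lt_add_one s.re) hb hs

/-- Integration by parts: the Mellin transform turns the Euler operator into
multiplication by `-s`. -/
theorem mellin_eulerOp {f : ℝ → ℂ} (hf : ContDiff ℝ 1 f) (hcs : HasCompactSupport f) {b : ℝ}
    (hb : f =O[𝓝[>] 0] (· ^ (-b))) (hb' : eulerOp f =O[𝓝[>] 0] (· ^ (-b)))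
    {s : ℂ} (hs : b < s.re) :
    mellin (eulerOp f) s = -(s * mellin f s) := by
  have hconv := mellinConvergent_of_hasCompactSupport hf.continuous hcs hb hs
  have hconv' := mellinConvergent_of_hasCompactSupport hf.continuous_eulerOp hcs.eulerOp hb' hs
  have hcpow : ∀ r ∈ Ioi (0 : ℝ),
      (r : ℂ) ^ (s - 1) * eulerOp f r = (r : ℂ) ^ s * deriv f r :=
    fun r hr => cpow_sub_one_mul_eulerOp f s hr
  have hbot : Tendsto ((fun r : ℝ => (r : ℂ) ^ s) * f) (𝓝[>] 0) (𝓝 0) := by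
    have hO : ((fun r : ℝ => (r : ℂ) ^ s) * f) =O[𝓝[>] 0] fun r : ℝ => r ^ (s.re - b) := by
      have hpow : (fun r : ℝ => (r : ℂ) ^ s) =O[𝓝[>] 0] fun r : ℝ => r ^ s.re := by
        refine IsBigO.of_bound 1 ?_
        filter_upwards [self_mem_nhdsWithin] with r hr
        rw [Complex.norm_cpow_eq_rpow_re_of_pos hr, one_mul]
        exact le_abs_self _
      refine (hpow.mul hb).congr' EventuallyEq.rfl ?_
      filter_upwards [self_mem_nhdsWithin] with r hr
      rw [← Real.rpow_add hr, sub_eq_add_neg]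
    refine hO.trans_tendsto ?_
    have hpos : 0 < s.re - b := sub_pos.2 hs
    have := (Real.continuousAt_rpow_const 0 (s.re - b) (Or.inr hpos.le)).tendsto
    rw [Real.zero_rpow hpos.ne'] at this
    exact this.mono_left nhdsWithin_le_nhds
  have htop : Tendsto ((fun r : ℝ => (r : ℂ) ^ s) * f) atTop (𝓝 0) := by
    refine tendsto_const_nhds.congr' ?_
    filter_upwards [hcs.eventuallyEq_zero_atTop] with r hr
    simp [hr]
  have hparts := integral_Ioi_mul_deriv_eq_deriv_mul (a := (0 : ℝ))
    (u := fun r : ℝ => (r : ℂ) ^ s) (u' := fun r : ℝ => s * (r : ℂ) ^ (s - 1))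
    (v := f) (v' := deriv f)
    (fun r hr => by
      simpa using! ((hasDerivAt_id (r : ℂ)).cpow_const (c := s)
        (Complex.ofReal_mem_slitPlane.2 hr)).comp_ofReal)
    (fun r _ => (hf.differentiable one_ne_zero r).hasDerivAt)
    ((integrableOn_congr_fun hcpow measurableSet_Ioi).1 hconv')
    (by simpa [Pi.mul_def, mul_assoc] using! Integrable.const_mul hconv s)
    hbot htop
  simp only [mellin, smul_eq_mul]
  rw [setIntegral_congr_fun measurableSet_Ioi hcpow, hparts, ← integral_const_mul]
  simp [mul_assoc]

/-- On a vertical strip the Mellin transform is bounded by the transforms of the norm at the two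
edges. -/
theorem exists_norm_mellin_le {f : ℝ → ℂ} (a b : ℝ) (ha : MellinConvergent f a)
    (hb : MellinConvergent f b) :
    ∃ C : ℝ, ∀ s : ℂ, s.re ∈ Icc a b → ‖mellin f s‖ ≤ C := by
  refine ⟨∫ r in Ioi (0 : ℝ), (‖(r : ℂ) ^ ((a : ℂ) - 1) • f r‖ + ‖(r : ℂ) ^ ((b : ℂ) - 1) • f r‖),
    fun s hs => norm_integral_le_of_norm_le (ha.norm.add hb.norm) ?_⟩
  filter_upwards [ae_restrict_mem measurableSet_Ioi] with r hr
  simp only [norm_smul, Complex.norm_cpow_eq_rpow_re_of_pos hr, Complex.sub_re, Complex.ofReal_re,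
    Complex.one_re, ← add_mul]
  refine mul_le_mul_of_nonneg_right ?_ (norm_nonneg _)
  have hra := Real.rpow_nonneg (le_of_lt hr) (a - 1)
  have hrb := Real.rpow_nonneg (le_of_lt hr) (b - 1)
  rcases le_total 1 r with h | h
  · linarith [Real.rpow_le_rpow_of_exponent_le h (sub_le_sub_right hs.2 1)]
  · linarith [Real.rpow_le_rpow_of_exponent_ge hr h (sub_le_sub_right hs.1 1)]

/-- The Mellin transform of a test function on `(0, ∞)` is rapidly decreasing on vertical
strips. -/
theorem exists_norm_pow_mul_norm_mellin_le {f : ℝ → ℂ} (hf : ContDiff ℝ (⊤ : ℕ∞) f)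
    (hcs : HasCompactSupport f) (h0 : f =ᶠ[𝓝 0] 0) (a b : ℝ) (N : ℕ) :
    ∃ C : ℝ, ∀ s : ℂ, s.re ∈ Icc a b → ‖s‖ ^ N * ‖mellin f s‖ ≤ C := by
  induction N generalizing f with
  | zero =>
    have hconv (c : ℝ) : MellinConvergent f c :=
      mellinConvergent_of_hasCompactSupport hf.continuous hcs
        (isBigO_nhdsGT_of_eventuallyEq_zero h0) (sub_one_lt _)
    simpa using exists_norm_mellin_le a b (hconv a) (hconv b)
  | succ N ih =>
    have h0' := eulerOp_eventuallyEq_zero h0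
    obtain ⟨C, hC⟩ := ih hf.eulerOp hcs.eulerOp h0'
    refine ⟨C, fun s hs => (hC s hs).trans' (le_of_eq ?_)⟩
    rw [mellin_eulerOp (hf.of_le (mod_cast le_top)) hcs (isBigO_nhdsGT_of_eventuallyEq_zero h0)
      (isBigO_nhdsGT_of_eventuallyEq_zero h0') (sub_one_lt _), norm_neg, norm_mul, pow_succ,
      mul_assoc]

/-- For a cut-off function `ω` one has, for `Re z > 0`,
`∫_0^∞ r^{z-1} ω(r) dr = -z⁻¹ ∫_0^∞ r^z ω'(r) dr`; the function
`Ψ(z) := ∫_0^∞ r^z ω'(r) dr` is entire with `Ψ(0) = -1` (so that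
`Φ(z) = -z⁻¹ Ψ(z)` is meromorphic on `ℂ` with a simple pole at `z = 0` as its
only pole), and `Φ` is rapidly decreasing on vertical lines, uniformly for the
real part in compact intervals. -/
theorem mellin_cutoff_by_parts_and_decay
    (ω : ℝ → ℝ) (hω : ContDiff ℝ (⊤ : ℕ∞) ω) (hcs : HasCompactSupport ω)
    (hone : ∀ᶠ r in nhds (0 : ℝ), ω r = 1) :
    let Ψ : ℂ → ℂ := fun z => ∫ r in Ioi (0 : ℝ), (r : ℂ) ^ z * ((deriv ω r : ℝ) : ℂ)
    (∀ z : ℂ, 0 < z.re →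
        (∫ r in Ioi (0 : ℝ), (r : ℂ) ^ (z - 1) * (ω r : ℂ)) = -z⁻¹ * Ψ z) ∧
      Differentiable ℂ Ψ ∧ Ψ 0 = -1 ∧
      ∀ (N : ℕ) (a b : ℝ), a ≤ b → ∃ C : ℝ, 0 < C ∧
        ∀ σ ∈ Icc a b, ∀ ρ : ℝ, 1 ≤ |ρ| →
          ‖-((σ : ℂ) + ρ * Complex.I)⁻¹ * Ψ ((σ : ℂ) + ρ * Complex.I)‖
            ≤ C * (|ρ| ^ N)⁻¹ := by
  intro Ψ
  set f : ℝ → ℂ := fun r => (ω r : ℂ)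
  have hf : ContDiff ℝ (⊤ : ℕ∞) f := Complex.ofRealCLM.contDiff.comp hω
  have hf1 : ContDiff ℝ 1 f := hf.of_le (mod_cast le_top)
  have hfcs : HasCompactSupport f := hcs.comp_left Complex.ofReal_zero
  have hf_one : f =ᶠ[𝓝 0] fun _ => 1 := by
    filter_upwards [hone] with r hr
    simp [f, hr]
  have h0 : eulerOp f =ᶠ[𝓝 0] 0 := eulerOp_eventuallyEq_zero hf_one
  have hderiv (r : ℝ) : deriv f r = ((deriv ω r : ℝ) : ℂ) :=
    ((hω.differentiable (by simp) r).hasDerivAt.ofReal_comp).deriv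
  have hΨ (z : ℂ) : Ψ z = mellin (eulerOp f) z := by
    refine setIntegral_congr_fun measurableSet_Ioi fun r hr => ?_
    simp only [smul_eq_mul]
    rw [cpow_sub_one_mul_eulerOp f z hr, hderiv]
  refine ⟨fun z hz => ?_, fun z => ?_, ?_, fun N a b _ => ?_⟩
  · have hz0 : z ≠ 0 := by
      rintro rfl
      simp at hz
    have hO : f =O[𝓝[>] 0] fun r : ℝ => r ^ (-(0 : ℝ)) := by
      refine (hf_one.filter_mono nhdsWithin_le_nhds).trans_isBigO ?_
      simpa using isBigO_const_const (1 : ℂ) (one_ne_zero (α := ℝ)) _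
    rw [hΨ, mellin_eulerOp hf1 hfcs hO (isBigO_nhdsGT_of_eventuallyEq_zero h0) hz, neg_mul_neg,
      inv_mul_cancel_left₀ hz0]
    rfl
  · rw [funext hΨ]
    exact mellin_differentiableAt_of_isBigO_rpow
      (hf.eulerOp.continuous.locallyIntegrable.locallyIntegrableOn _) hfcs.eulerOp.isBigO_atTop
      (lt_add_one z.re) (isBigO_nhdsGT_of_eventuallyEq_zero h0) (sub_one_lt z.re)
  · have h := hfcs.integral_Ioi_deriv_eq hf1 0
    rw [hf_one.eq_of_nhds] at h
    simpa [Ψ, hderiv] using h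
  · obtain ⟨C, hC⟩ :=
      exists_norm_pow_mul_norm_mellin_le hf.eulerOp hfcs.eulerOp h0 a b N
    refine ⟨max C 1, by positivity, fun σ hσ ρ hρ => ?_⟩
    set z : ℂ := (σ : ℂ) + ρ * Complex.I with hz
    have hzre : z.re = σ := by simp [hz]
    have hρz : |ρ| ≤ ‖z‖ := by simpa [hz] using Complex.abs_im_le_norm z
    have hρ0 : 0 < |ρ| := zero_lt_one.trans_le hρ
    rw [← div_eq_mul_inv, le_div_iff₀ (pow_pos hρ0 N), norm_mul, norm_neg, norm_inv, hΨ]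
    calc ‖z‖⁻¹ * ‖mellin (eulerOp f) z‖ * |ρ| ^ N
        ≤ 1 * ‖mellin (eulerOp f) z‖ * ‖z‖ ^ N := by
          gcongr
          exact inv_le_one_of_one_le₀ (hρ.trans hρz)
      _ = ‖z‖ ^ N * ‖mellin (eulerOp f) z‖ := by ring
      _ ≤ max C 1 := (hC z (hzre ▸ hσ)).trans (le_max_left _ _)
end

section
/- Let ω be a cut-off function, p ∈ ℂ and k ∈ ℕ. The function z ↦ ∫_0^∞ r^{z−p−1} (log r)^k ω(r) dr (the Mellin transform of ω(r) r^{−p} log^k r) converges absolutely and is holomorphic on {Re z > Re p}, and there exists an entire function g such that it equals (−1)^k k! (z−p)^{−(k+1)} + g(z) on that half-plane. Hence it extends to a meromorphic function on ℂ whose only pole is at z = p, of order k+1. (This is the statement that the Mellin transform carries the singular functions of discrete asymptotics to meromorphic functions with a pole at p of multiplicity k+1.) -/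
open MeasureTheory Set

open Filter Asymptotics Topology in
/-- Powers of `log` times a function that equals `1` near `0⁺` grow slower than any negative
power of `t` as `t → 0⁺`. -/
theorem isBigO_rpow_zero_log_pow_mul {f : ℝ → ℂ} (hf : ∀ᶠ t in 𝓝[>] (0 : ℝ), f t = 1) (k : ℕ)
    {b : ℝ} (hb : 0 < b) :
    (fun t : ℝ => (Real.log t : ℂ) ^ k * f t) =O[𝓝[>] 0] (fun t : ℝ => t ^ (-b)) := by
  induction k generalizing b with
  | zero =>
    refine IsBigO.of_bound 1 ?_
    filter_upwards [hf, Ioo_mem_nhdsGT one_pos] with t h1 ht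
    have := Real.one_le_rpow_of_pos_of_le_one_of_nonpos ht.1 ht.2.le (neg_nonpos.mpr hb.le)
    simpa [h1] using this.trans (le_abs_self _)
  | succ k ih =>
    refine (isBigO_rpow_zero_log_smul (half_lt_self hb) (ih (half_pos hb))).congr_left fun t => ?_
    rw [Complex.real_smul]
    ring

/-- Multiplication by a power of `log` preserves local integrability on `(0, ∞)`. -/
theorem locallyIntegrableOn_log_pow_mul {f : ℝ → ℂ} (hf : LocallyIntegrableOn f (Ioi 0)) (k : ℕ) :
    LocallyIntegrableOn (fun t : ℝ => (Real.log t : ℂ) ^ k * f t) (Ioi 0) := by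
  refine hf.continuousOn_mul (ContinuousOn.pow ?_ k) isOpen_Ioi.isLocallyClosed
  exact Complex.continuous_ofReal.comp_continuousOn
    (Real.continuousOn_log.mono fun t ht => ne_of_gt ht)

open Filter Asymptotics in
theorem isBigO_log_pow_mul_of_eventually_zero {l : Filter ℝ} {f : ℝ → ℂ} (hf : ∀ᶠ t in l, f t = 0)
    (k : ℕ) (g : ℝ → ℝ) : (fun t : ℝ => (Real.log t : ℂ) ^ k * f t) =O[l] g :=
  EventuallyEq.trans_isBigO (hf.mono fun t h => by simp [h]) (isBigO_zero g l)

open Filter Topology in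
/-- If `f` equals `1` near `0⁺` and vanishes near `∞`, then the Mellin transform of `log ^ k * f`
converges on the right half-plane, where its derivative is the Mellin transform of
`log ^ (k + 1) * f`. -/
theorem mellin_log_pow_mul {f : ℝ → ℂ} (hfi : LocallyIntegrableOn f (Ioi 0))
    (hf0 : ∀ᶠ t in 𝓝[>] (0 : ℝ), f t = 1) (hft : ∀ᶠ t in atTop, f t = 0) (k : ℕ)
    {s : ℂ} (hs : 0 < s.re) :
    MellinConvergent (fun t : ℝ => (Real.log t : ℂ) ^ k * f t) s ∧
      HasDerivAt (mellin fun t : ℝ => (Real.log t : ℂ) ^ k * f t)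
        (mellin (fun t : ℝ => (Real.log t : ℂ) ^ (k + 1) * f t) s) s := by
  have hli := locallyIntegrableOn_log_pow_mul hfi k
  have htop := isBigO_log_pow_mul_of_eventually_zero hft k (fun t => t ^ (-(s.re + 1)))
  have hzero := isBigO_rpow_zero_log_pow_mul hf0 k (half_pos hs)
  refine ⟨mellinConvergent_of_isBigO_rpow hli htop (lt_add_one _) hzero (half_lt_self hs), ?_⟩
  have h := (mellin_hasDerivAt_of_isBigO_rpow hli htop (lt_add_one _) hzero (half_lt_self hs)).2
  simp only [Complex.real_smul, ← mul_assoc, ← pow_succ'] at h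
  exact h

open Filter Topology in
/-- If `f` vanishes near `0⁺` and near `∞`, then the Mellin transform of `log ^ k * f` is entire. -/
theorem differentiable_mellin_log_pow_mul {f : ℝ → ℂ} (hfi : LocallyIntegrableOn f (Ioi 0))
    (hf0 : ∀ᶠ t in 𝓝[>] (0 : ℝ), f t = 0) (hft : ∀ᶠ t in atTop, f t = 0) (k : ℕ) :
    Differentiable ℂ (mellin fun t : ℝ => (Real.log t : ℂ) ^ k * f t) := fun s =>
  mellin_differentiableAt_of_isBigO_rpow (locallyIntegrableOn_log_pow_mul hfi k)
    (isBigO_log_pow_mul_of_eventually_zero hft k (fun t => t ^ (-(s.re + 1)))) (lt_add_one _)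
    (isBigO_log_pow_mul_of_eventually_zero hf0 k (fun t => t ^ (-(s.re - 1)))) (sub_one_lt _)

theorem locallyIntegrableOn_indicator_Ioc_one :
    LocallyIntegrableOn (indicator (Ioc 0 1) (fun _ => 1 : ℝ → ℂ)) (Ioi 0) :=
  ((locallyIntegrable_const (1 : ℂ)).indicator measurableSet_Ioc).locallyIntegrableOn _

open Filter Topology in
theorem indicator_Ioc_one_eventually_eq_one :
    ∀ᶠ t in 𝓝[>] (0 : ℝ), indicator (Ioc 0 1) (fun _ => 1 : ℝ → ℂ) t = 1 := by
  filter_upwards [Ioo_mem_nhdsGT (one_pos (α := ℝ))] with t ht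
  exact indicator_of_mem (show t ∈ Ioc 0 1 from ⟨ht.1, ht.2.le⟩) _

open Filter in
theorem indicator_Ioc_one_eventually_eq_zero :
    ∀ᶠ t in atTop, indicator (Ioc 0 1) (fun _ => 1 : ℝ → ℂ) t = 0 := by
  filter_upwards [eventually_gt_atTop 1] with t ht
  exact indicator_of_notMem (fun h => h.2.not_gt ht) _

/-- The Mellin transform of `log ^ k` restricted to `(0, 1]`. -/
theorem mellin_log_pow_indicator_Ioc (k : ℕ) {s : ℂ} (hs : 0 < s.re) :
    mellin (fun t : ℝ => (Real.log t : ℂ) ^ k * indicator (Ioc 0 1) (fun _ => 1 : ℝ → ℂ) t) s =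
      (-1) ^ k * (k.factorial : ℂ) * (s ^ (k + 1))⁻¹ := by
  induction k generalizing s with
  | zero => simpa using (hasMellin_one_Ioc hs).2
  | succ k ih =>
    have hs0 : s ≠ 0 := by rintro rfl; simp at hs
    have hd := (mellin_log_pow_mul locallyIntegrableOn_indicator_Ioc_one
      indicator_Ioc_one_eventually_eq_one indicator_Ioc_one_eventually_eq_zero k hs).2
    have hd' := (((hasDerivAt_pow (k + 1) s).inv (pow_ne_zero _ hs0)).const_mul
      ((-1) ^ k * (k.factorial : ℂ)))
    have hev := (Complex.continuous_re.continuousAt (x := s)).eventually (lt_mem_nhds hs)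
    rw [hd.unique (hd'.congr_of_eventuallyEq (hev.mono fun z hz => ih hz))]
    push_cast [Nat.factorial_succ]
    field_simp
    ring

/-- The Mellin transform carries the singular functions of discrete asymptotics
to meromorphic functions: for a cut-off function `ω`, `p ∈ ℂ` and `k ∈ ℕ`, the
function `z ↦ ∫_0^∞ r^{z-p-1} (log r)^k ω(r) dr` converges absolutely and is
holomorphic on `{Re z > Re p}`, and it equals
`(-1)^k k! (z-p)^{-(k+1)}` plus an entire function there; hence it extends
meromorphically to `ℂ` with a single pole at `z = p` of order `k+1`. -/
theorem mellin_of_singular_function_pole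
    (ω : ℝ → ℝ) (hω : ContDiff ℝ (⊤ : ℕ∞) ω) (hcs : HasCompactSupport ω)
    (hone : ∀ᶠ r in nhds (0 : ℝ), ω r = 1) (p : ℂ) (k : ℕ) :
    (∀ z : ℂ, p.re < z.re →
        IntegrableOn
          (fun r : ℝ => (r : ℂ) ^ (z - p - 1) * ((Real.log r : ℝ) : ℂ) ^ k * (ω r : ℂ))
          (Ioi 0)) ∧
      DifferentiableOn ℂ
        (fun z : ℂ => ∫ r in Ioi (0 : ℝ),
          (r : ℂ) ^ (z - p - 1) * ((Real.log r : ℝ) : ℂ) ^ k * (ω r : ℂ))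
        {z : ℂ | p.re < z.re} ∧
      ∃ g : ℂ → ℂ, Differentiable ℂ g ∧ ∀ z : ℂ, p.re < z.re →
        (∫ r in Ioi (0 : ℝ),
            (r : ℂ) ^ (z - p - 1) * ((Real.log r : ℝ) : ℂ) ^ k * (ω r : ℂ))
          = (-1) ^ k * (k.factorial : ℂ) * ((z - p) ^ (k + 1))⁻¹ + g z := by
  set f : ℝ → ℂ := fun r => (ω r : ℂ)
  set χ : ℝ → ℂ := indicator (Ioc 0 1) (fun _ => 1)
  have hfi : LocallyIntegrableOn f (Ioi 0) :=
    (Complex.continuous_ofReal.comp hω.continuous).locallyIntegrable.locallyIntegrableOn _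
  have hf0 : ∀ᶠ t in nhdsWithin (0 : ℝ) (Ioi 0), f t = 1 :=
    (hone.filter_mono nhdsWithin_le_nhds).mono fun t ht => by simp [f, ht]
  have hft : ∀ᶠ t in Filter.atTop, f t = 0 := by
    have h := (hasCompactSupport_iff_eventuallyEq.mp hcs).filter_mono
      (Filter.coclosedCompact_eq_cocompact (X := ℝ) ▸ atTop_le_cocompact)
    exact h.mono fun t ht => by simp [f, ht]
  have hmem : ∀ {z : ℂ}, p.re < z.re → 0 < (z - p).re := fun hz => by
    simpa using hz
  have hmellin : ∀ z : ℂ, (∫ r in Ioi (0 : ℝ),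
      (r : ℂ) ^ (z - p - 1) * ((Real.log r : ℝ) : ℂ) ^ k * (ω r : ℂ)) =
        mellin (fun t : ℝ => (Real.log t : ℂ) ^ k * f t) (z - p) := fun z => by
    simp only [mellin, smul_eq_mul, mul_assoc, f]
  simp only [hmellin]
  refine ⟨fun z hz => ?_, fun z hz => ?_,
    fun z => mellin (fun t : ℝ => (Real.log t : ℂ) ^ k * (f t - χ t)) (z - p), ?_, fun z hz => ?_⟩
  · simpa only [MellinConvergent, smul_eq_mul, ← mul_assoc] using
      (mellin_log_pow_mul hfi hf0 hft k (hmem hz)).1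
  · exact ((mellin_log_pow_mul hfi hf0 hft k (hmem hz)).2.differentiableAt.comp z
      (differentiableAt_id.sub_const p)).differentiableWithinAt
  · refine (differentiable_mellin_log_pow_mul (hfi.sub locallyIntegrableOn_indicator_Ioc_one)
      ?_ ?_ k).comp (differentiable_id.sub_const p)
    · filter_upwards [hf0, indicator_Ioc_one_eventually_eq_one] with t h₁ h₂
      simp [h₁, h₂]
    · filter_upwards [hft, indicator_Ioc_one_eventually_eq_zero] with t h₁ h₂
      simp [h₁, h₂]
  · have hsub := (hasMellin_sub (mellin_log_pow_mul hfi hf0 hft k (hmem hz)).1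
      (mellin_log_pow_mul locallyIntegrableOn_indicator_Ioc_one
        indicator_Ioc_one_eventually_eq_one indicator_Ioc_one_eventually_eq_zero k (hmem hz)).1).2
    rw [mellin_log_pow_indicator_Ioc k (hmem hz)] at hsub
    simp only [mul_sub]
    rw [hsub]
    ring
end

section
/- Let U ⊆ ℝ^p be open, H, H̃ complex Hilbert spaces with group actions κ, κ̃, μ ∈ ℝ, C > 0, and let a ∈ C^∞(U×ℝ^q, L(H,H̃)) satisfy the twisted homogeneity relation a(y,λη) = λ^μ κ̃_λ ∘ a(y,η) ∘ κ_λ^{−1} for all y ∈ U, all η with |η| ≥ C, and all λ ≥ 1. Then a satisfies the symbol estimates of order μ with respect to (κ,κ̃): for all multi-indices α, β and every compact K ⊂ U there is c > 0 with ‖κ̃_{⟨η⟩}^{−1} (∂_y^α ∂_η^β a)(y,η) κ_{⟨η⟩}‖ ≤ c ⟨η⟩^{μ−|β|} on K×ℝ^q. -/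
open Set

/-- The "japanese bracket" `⟨η⟩ = (1+|η|²)^{1/2}` for `η ∈ ℝ^q`. -/
noncomputable def jap {q : ℕ} (η : Fin q → ℝ) : ℝ :=
  Real.sqrt (1 + ∑ j, η j ^ 2)

/-- Partial derivative `∂_{y_i}` in the first group of variables of a function on
`ℝ^p × ℝ^q`. -/
noncomputable def pdY {p q : ℕ} {E : Type*} [NormedAddCommGroup E] [NormedSpace ℝ E]
    (i : Fin p) (f : (Fin p → ℝ) × (Fin q → ℝ) → E) :
    (Fin p → ℝ) × (Fin q → ℝ) → E :=
  fun x => fderiv ℝ f x (Pi.single i 1, 0)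

/-- Partial derivative `∂_{η_j}` in the second group of variables. -/
noncomputable def pdEta {p q : ℕ} {E : Type*} [NormedAddCommGroup E] [NormedSpace ℝ E]
    (j : Fin q) (f : (Fin p → ℝ) × (Fin q → ℝ) → E) :
    (Fin p → ℝ) × (Fin q → ℝ) → E :=
  fun x => fderiv ℝ f x (0, Pi.single j 1)

/-- The mixed partial derivative `∂_y^α ∂_η^β`, where the multi-indices `α, β`
are encoded as lists of coordinate directions. -/
noncomputable def mderiv {p q : ℕ} {E : Type*} [NormedAddCommGroup E] [NormedSpace ℝ E]
    (α : List (Fin p)) (β : List (Fin q))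
    (f : (Fin p → ℝ) × (Fin q → ℝ) → E) :
    (Fin p → ℝ) × (Fin q → ℝ) → E :=
  α.foldr pdY (β.foldr pdEta f)

/-- A group action on a complex normed space. -/
structure IsGroupAction {H : Type*} [NormedAddCommGroup H] [NormedSpace ℂ H]
    (κ : ℝ → H →L[ℂ] H) : Prop where
  inv : ∀ l : ℝ, 0 < l → Function.Bijective (κ l)
  one : κ 1 = ContinuousLinearMap.id ℂ H
  mul : ∀ l l' : ℝ, 0 < l → 0 < l' → (κ l).comp (κ l') = κ (l * l')
  cont : ∀ h : H, ContinuousOn (fun l : ℝ => κ l h) (Ioi 0)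

/-- The operator-valued symbol estimates of order `μ` with respect to the pair of
group actions `(κ, κ')`:
`‖κ'_{⟨η⟩}^{-1} (∂_y^α ∂_η^β a)(y,η) κ_{⟨η⟩}‖ ≤ c ⟨η⟩^{μ-|β|}` on `K × ℝ^q` for
every compact `K ⊂ U`. -/
def SymbolEst {p q : ℕ} {H H' : Type*}
    [NormedAddCommGroup H] [NormedSpace ℂ H]
    [NormedAddCommGroup H'] [NormedSpace ℂ H']
    (μ : ℝ) (κ : ℝ → H →L[ℂ] H) (κ' : ℝ → H' →L[ℂ] H')
    (U : Set (Fin p → ℝ))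
    (a : (Fin p → ℝ) × (Fin q → ℝ) → (H →L[ℂ] H')) : Prop :=
  ∀ (α : List (Fin p)) (β : List (Fin q)) (K : Set (Fin p → ℝ)),
    K ⊆ U → IsCompact K → ∃ c : ℝ, 0 < c ∧
      ∀ y ∈ K, ∀ η : Fin q → ℝ,
        ‖(κ' (jap η)⁻¹).comp ((mderiv α β a (y, η)).comp (κ (jap η)))‖
          ≤ c * jap η ^ (μ - (β.length : ℝ))

section Homogeneity

variable {p q : ℕ} {E : Type*} [NormedAddCommGroup E] [NormedSpace ℝ E]

lemma ContDiffOn.pdY {U : Set (Fin p → ℝ)} (hU : IsOpen U)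
    {f : (Fin p → ℝ) × (Fin q → ℝ) → E}
    (hf : ContDiffOn ℝ (⊤ : ℕ∞) f (U ×ˢ (univ : Set (Fin q → ℝ)))) (i : Fin p) :
    ContDiffOn ℝ (⊤ : ℕ∞) (pdY i f) (U ×ˢ (univ : Set (Fin q → ℝ))) :=
  (hf.fderiv_of_isOpen (hU.prod isOpen_univ) le_rfl).clm_apply contDiffOn_const

lemma ContDiffOn.pdEta {U : Set (Fin p → ℝ)} (hU : IsOpen U)
    {f : (Fin p → ℝ) × (Fin q → ℝ) → E}
    (hf : ContDiffOn ℝ (⊤ : ℕ∞) f (U ×ˢ (univ : Set (Fin q → ℝ)))) (j : Fin q) :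
    ContDiffOn ℝ (⊤ : ℕ∞) (pdEta j f) (U ×ˢ (univ : Set (Fin q → ℝ))) :=
  (hf.fderiv_of_isOpen (hU.prod isOpen_univ) le_rfl).clm_apply contDiffOn_const

lemma ContDiffOn.mderiv {U : Set (Fin p → ℝ)} (hU : IsOpen U)
    {f : (Fin p → ℝ) × (Fin q → ℝ) → E}
    (hf : ContDiffOn ℝ (⊤ : ℕ∞) f (U ×ˢ (univ : Set (Fin q → ℝ))))
    (α : List (Fin p)) (β : List (Fin q)) :
    ContDiffOn ℝ (⊤ : ℕ∞) (mderiv α β f) (U ×ˢ (univ : Set (Fin q → ℝ))) := by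
  unfold _root_.mderiv
  induction α with
  | nil =>
    induction β with
    | nil => exact hf
    | cons j β ih => exact ih.pdEta hU j
  | cons i α ih => exact ih.pdY hU i

lemma continuous_sqrt_sum_sq :
    Continuous fun η : Fin q → ℝ => Real.sqrt (∑ j, η j ^ 2) := by
  fun_prop

lemma sqrt_sum_sq_smul {l : ℝ} (hl : 0 ≤ l) (η : Fin q → ℝ) :
    Real.sqrt (∑ j, (l • η) j ^ 2) = l * Real.sqrt (∑ j, η j ^ 2) := by
  simp only [Pi.smul_apply, smul_eq_mul, mul_pow, ← Finset.mul_sum]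
  rw [Real.sqrt_mul (sq_nonneg l), Real.sqrt_sq hl]

lemma isCompact_sqrt_sum_sq_le (R : ℝ) :
    IsCompact {η : Fin q → ℝ | Real.sqrt (∑ j, η j ^ 2) ≤ R} := by
  refine (isCompact_closedBall (0 : Fin q → ℝ) R).of_isClosed_subset
    (isClosed_le continuous_sqrt_sum_sq continuous_const) fun η hη => ?_
  have hη' : Real.sqrt (∑ j, η j ^ 2) ≤ R := hη
  rw [mem_closedBall_zero_iff, pi_norm_le_iff_of_nonneg ((Real.sqrt_nonneg _).trans hη')]
  intro j
  refine le_trans (Real.le_sqrt_of_sq_le ?_) hη'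
  rw [Real.norm_eq_abs, sq_abs]
  exact Finset.single_le_sum (f := fun j => η j ^ 2) (fun _ _ => sq_nonneg _) (Finset.mem_univ j)

/-- `f` is homogeneous of degree `ν`, twisted by the operators `T l`, for `y ∈ U` and
`|η| > C`. -/
def IsTwistedHomogeneous (T : ℝ → E →L[ℝ] E) (ν C : ℝ) (U : Set (Fin p → ℝ))
    (f : (Fin p → ℝ) × (Fin q → ℝ) → E) : Prop :=
  ∀ y ∈ U, ∀ η : Fin q → ℝ, C < Real.sqrt (∑ j, η j ^ 2) → ∀ l : ℝ, 1 ≤ l →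
    f (y, l • η) = l ^ ν • T l (f (y, η))

lemma IsTwistedHomogeneous.fderiv_apply {T : ℝ → E →L[ℝ] E} {ν C : ℝ}
    {U : Set (Fin p → ℝ)} (hU : IsOpen U) {f : (Fin p → ℝ) × (Fin q → ℝ) → E}
    (hf : ContDiffOn ℝ (⊤ : ℕ∞) f (U ×ˢ (univ : Set (Fin q → ℝ))))
    (h : IsTwistedHomogeneous T ν C U f) {y : Fin p → ℝ} (hy : y ∈ U) {η : Fin q → ℝ}
    (hη : C < Real.sqrt (∑ j, η j ^ 2)) {l : ℝ} (hl : 1 ≤ l)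
    (v : (Fin p → ℝ) × (Fin q → ℝ)) :
    fderiv ℝ f (y, l • η) (v.1, l • v.2) = l ^ ν • T l (fderiv ℝ f (y, η) v) := by
  have hd : ∀ ξ : Fin q → ℝ, HasFDerivAt f (fderiv ℝ f (y, ξ)) (y, ξ) := fun ξ =>
    ((hf.contDiffAt ((hU.prod isOpen_univ).mem_nhds ⟨hy, mem_univ _⟩)).differentiableAt
      (by simp)).hasFDerivAt
  let S : (Fin p → ℝ) × (Fin q → ℝ) →L[ℝ] (Fin p → ℝ) × (Fin q → ℝ) :=
    (ContinuousLinearMap.id ℝ (Fin p → ℝ)).prodMap (l • ContinuousLinearMap.id ℝ (Fin q → ℝ))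
  have hleft : HasFDerivAt (fun x => f (S x)) ((fderiv ℝ f (y, l • η)).comp S) (y, η) :=
    HasFDerivAt.comp (y, η) (hd (l • η)) S.hasFDerivAt
  have hright : HasFDerivAt (fun x => (l ^ ν • T l) (f x))
      ((l ^ ν • T l).comp (fderiv ℝ f (y, η))) (y, η) :=
    (l ^ ν • T l).hasFDerivAt.comp (y, η) (hd η)
  have hopen : IsOpen (U ×ˢ {ξ : Fin q → ℝ | C < Real.sqrt (∑ j, ξ j ^ 2)}) :=
    hU.prod (isOpen_lt continuous_const continuous_sqrt_sum_sq)
  have heq : (fun x => f (S x)) =ᶠ[nhds (y, η)] fun x => (l ^ ν • T l) (f x) := by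
    filter_upwards [hopen.mem_nhds (mk_mem_prod hy hη)] with x hx
    exact h x.1 hx.1 x.2 hx.2 l hl
  have := (hleft.congr_of_eventuallyEq heq.symm).unique hright
  exact DFunLike.congr_fun this v

lemma IsTwistedHomogeneous.pdY {T : ℝ → E →L[ℝ] E} {ν C : ℝ}
    {U : Set (Fin p → ℝ)} (hU : IsOpen U) {f : (Fin p → ℝ) × (Fin q → ℝ) → E}
    (hf : ContDiffOn ℝ (⊤ : ℕ∞) f (U ×ˢ (univ : Set (Fin q → ℝ))))
    (h : IsTwistedHomogeneous T ν C U f) (i : Fin p) :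
    IsTwistedHomogeneous T ν C U (pdY i f) := by
  intro y hy η hη l hl
  simpa [_root_.pdY] using h.fderiv_apply hU hf hy hη hl (Pi.single i 1, 0)

lemma IsTwistedHomogeneous.pdEta {T : ℝ → E →L[ℝ] E} {ν C : ℝ}
    {U : Set (Fin p → ℝ)} (hU : IsOpen U) {f : (Fin p → ℝ) × (Fin q → ℝ) → E}
    (hf : ContDiffOn ℝ (⊤ : ℕ∞) f (U ×ˢ (univ : Set (Fin q → ℝ))))
    (h : IsTwistedHomogeneous T ν C U f) (j : Fin q) :
    IsTwistedHomogeneous T (ν - 1) C U (pdEta j f) := by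
  intro y hy η hη l hl
  have hl0 : 0 < l := zero_lt_one.trans_le hl
  have key := h.fderiv_apply hU hf hy hη hl (0, Pi.single j 1)
  have hv : ((0 : Fin p → ℝ), l • (Pi.single j 1 : Fin q → ℝ)) =
      l • ((0 : Fin p → ℝ), (Pi.single j 1 : Fin q → ℝ)) := by simp
  simp only [hv, map_smul] at key
  rw [Real.rpow_sub_one hl0.ne', div_eq_inv_mul, mul_smul]
  exact (eq_inv_smul_iff₀ hl0.ne').2 key

lemma IsTwistedHomogeneous.mderiv {T : ℝ → E →L[ℝ] E} {ν C : ℝ}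
    {U : Set (Fin p → ℝ)} (hU : IsOpen U) {f : (Fin p → ℝ) × (Fin q → ℝ) → E}
    (hf : ContDiffOn ℝ (⊤ : ℕ∞) f (U ×ˢ (univ : Set (Fin q → ℝ))))
    (h : IsTwistedHomogeneous T ν C U f) (α : List (Fin p)) (β : List (Fin q)) :
    IsTwistedHomogeneous T (ν - (β.length : ℝ)) C U (mderiv α β f) := by
  induction α with
  | nil =>
    induction β with
    | nil => simpa [_root_.mderiv] using h
    | cons j β ih =>
      have := ih.pdEta hU (hf.mderiv hU [] β) j
      rw [sub_sub] at this
      simpa [_root_.mderiv] using this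
  | cons i α ih => exact ih.pdY hU (hf.mderiv hU α β) i

end Homogeneity

lemma IsGroupAction.exists_norm_le {H : Type*} [NormedAddCommGroup H] [NormedSpace ℂ H]
    [CompleteSpace H] {κ : ℝ → H →L[ℂ] H} (hκ : IsGroupAction κ) {K : Set ℝ}
    (hK : IsCompact K) (hK0 : K ⊆ Ioi 0) : ∃ A : ℝ, ∀ t ∈ K, ‖κ t‖ ≤ A := by
  obtain ⟨A, hA⟩ := banach_steinhaus (g := fun t : K => κ t) fun h => by
    obtain ⟨c, hc⟩ := hK.exists_bound_of_continuousOn ((hκ.cont h).mono hK0)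
    exact ⟨c, fun t => hc t t.2⟩
  exact ⟨A, fun t ht => hA ⟨t, ht⟩⟩

lemma jap_eq_sqrt_one_add_sq {q : ℕ} (η : Fin q → ℝ) :
    jap η = Real.sqrt (1 + Real.sqrt (∑ j, η j ^ 2) ^ 2) := by
  rw [jap, Real.sq_sqrt (Finset.sum_nonneg fun _ _ => sq_nonneg _)]

lemma one_le_jap {q : ℕ} (η : Fin q → ℝ) : 1 ≤ jap η := by
  rw [jap_eq_sqrt_one_add_sq]
  exact Real.le_sqrt_of_sq_le (by nlinarith [sq_nonneg (Real.sqrt (∑ j, η j ^ 2))])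

lemma sqrt_sum_sq_le_jap {q : ℕ} (η : Fin q → ℝ) : Real.sqrt (∑ j, η j ^ 2) ≤ jap η := by
  rw [jap_eq_sqrt_one_add_sq]
  exact Real.le_sqrt_of_sq_le (by linarith)

lemma jap_le_one_add {q : ℕ} (η : Fin q → ℝ) : jap η ≤ 1 + Real.sqrt (∑ j, η j ^ 2) := by
  rw [jap_eq_sqrt_one_add_sq, Real.sqrt_le_left (by positivity)]
  nlinarith [Real.sqrt_nonneg (∑ j, η j ^ 2)]

/-- The ratio of `⟨η⟩` and `max 1 (|η| / R)` stays in a compact subset of `(0, ∞)`. -/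
lemma jap_div_max_mem_Icc {q : ℕ} {R : ℝ} (hR : 0 < R) (η : Fin q → ℝ) :
    jap η / max 1 (Real.sqrt (∑ j, η j ^ 2) / R) ∈ Icc (R / (R + 1)) (1 + R) := by
  set r := Real.sqrt (∑ j, η j ^ 2) with hr
  have hl1 : 1 ≤ max 1 (r / R) := le_max_left _ _
  have hl2 : r ≤ max 1 (r / R) * R := (div_le_iff₀ hR).1 (le_max_right _ _)
  have hl0 : 0 < max 1 (r / R) := by positivity
  have hj1 := one_le_jap η
  have hjr : r ≤ jap η := sqrt_sum_sq_le_jap η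
  constructor
  · rw [div_le_div_iff₀ (by positivity) hl0]
    rcases max_choice 1 (r / R) with h | h <;> rw [h]
    · nlinarith
    · rw [mul_div_cancel₀ _ hR.ne']
      nlinarith
  · rw [div_le_iff₀ hl0]
    linarith [jap_le_one_add η]

/-- A function `a ∈ C^∞(U×ℝ^q, L(H,H̃))` which is twisted homogeneous of order
`μ` for large `|η|`, i.e. `a(y,λη) = λ^μ κ̃_λ a(y,η) κ_λ^{-1}` for `|η| ≥ C` and
`λ ≥ 1`, satisfies the symbol estimates of order `μ` with respect to `(κ, κ̃)`. -/
theorem twisted_homogeneous_satisfies_symbolEst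
    {p q : ℕ} {H H' : Type*}
    [NormedAddCommGroup H] [InnerProductSpace ℂ H] [CompleteSpace H]
    [NormedAddCommGroup H'] [InnerProductSpace ℂ H'] [CompleteSpace H']
    (κ : ℝ → H →L[ℂ] H) (κ' : ℝ → H' →L[ℂ] H')
    (hκ : IsGroupAction κ) (hκ' : IsGroupAction κ')
    (μ : ℝ) (C : ℝ) (hC : 0 < C)
    (U : Set (Fin p → ℝ)) (hU : IsOpen U)
    (a : (Fin p → ℝ) × (Fin q → ℝ) → (H →L[ℂ] H'))
    (ha : ContDiffOn ℝ (⊤ : ℕ∞) a (U ×ˢ (univ : Set (Fin q → ℝ))))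
    (hhom : ∀ y ∈ U, ∀ η : Fin q → ℝ, C ≤ Real.sqrt (∑ j, η j ^ 2) →
      ∀ l : ℝ, 1 ≤ l →
        a (y, l • η) = ((l ^ μ : ℝ) : ℂ) • (κ' l).comp ((a (y, η)).comp (κ l⁻¹))) :
    SymbolEst μ κ κ' U a := by
  let T : ℝ → (H →L[ℂ] H') →L[ℝ] (H →L[ℂ] H') := fun l =>
    ((ContinuousLinearMap.compL ℂ H H' H' (κ' l)).comp
      ((ContinuousLinearMap.compL ℂ H H H').flip (κ l⁻¹))).restrictScalars ℝ
  have hT : ∀ l b, T l b = (κ' l).comp (b.comp (κ l⁻¹)) := fun _ _ => rfl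
  have ha_hom : IsTwistedHomogeneous T μ C U a := by
    intro y hy η hη l hl
    rw [hhom y hy η hη.le l hl, hT, Complex.coe_smul]
  intro α β K hKU hK
  set ν : ℝ := μ - (β.length : ℝ)
  have hb := ha.mderiv hU α β
  have hb_hom : IsTwistedHomogeneous T ν C U (mderiv α β a) := ha_hom.mderiv hU ha α β
  have hR : 0 < 2 * C := by positivity
  set J : Set ℝ := Icc (2 * C / (2 * C + 1)) (1 + 2 * C)
  have hJ0 : J ⊆ Ioi 0 := fun t ht => lt_of_lt_of_le (by positivity) ht.1
  obtain ⟨A, hA⟩ := hκ.exists_norm_le isCompact_Icc hJ0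
  obtain ⟨A', hA'⟩ := hκ'.exists_norm_le
    (isCompact_Icc.image_of_continuousOn
      (continuousOn_id.inv₀ fun t ht => (hJ0 ht).ne') : IsCompact ((fun t => t⁻¹) '' J))
    (by rintro _ ⟨t, ht, rfl⟩; exact mem_Ioi.2 (inv_pos.2 (mem_Ioi.1 (hJ0 ht))))
  obtain ⟨D, hD⟩ := (isCompact_Icc : IsCompact J).exists_bound_of_continuousOn
    (f := fun t : ℝ => t ^ (-ν))
    (continuousOn_id.rpow_const fun t ht => Or.inl (hJ0 ht).ne')
  obtain ⟨B, hB⟩ := (hK.prod (isCompact_sqrt_sum_sq_le (2 * C))).exists_bound_of_continuousOn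
    (hb.continuousOn.mono (prod_mono hKU (subset_univ _)))
  refine ⟨|D| * (|A'| * (|B| * |A|)) + 1, by positivity, fun y hy η => ?_⟩
  set r := Real.sqrt (∑ j, η j ^ 2) with hr
  set l := max 1 (r / (2 * C)) with hl
  have hl1 : 1 ≤ l := le_max_left _ _
  have hl0 : 0 < l := zero_lt_one.trans_le hl1
  have hj0 : 0 < jap η := zero_lt_one.trans_le (one_le_jap η)
  set t := jap η / l with ht
  have htJ : t ∈ J := jap_div_max_mem_Icc hR η
  have ht0 : 0 < t := hJ0 htJ
  have hr0 : Real.sqrt (∑ j, (l⁻¹ • η) j ^ 2) = r / l := by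
    rw [sqrt_sum_sq_smul (inv_nonneg.2 hl0.le), inv_mul_eq_div]
  have hη0 : Real.sqrt (∑ j, (l⁻¹ • η) j ^ 2) ≤ 2 * C := by
    rw [hr0, div_le_iff₀ hl0, mul_comm, ← div_le_iff₀ hR]
    exact le_max_right _ _
  have hscale : mderiv α β a (y, η) = l ^ ν • T l (mderiv α β a (y, l⁻¹ • η)) := by
    rcases le_or_gt (r / (2 * C)) 1 with h | h
    · have h1 : l = 1 := max_eq_left h
      simp [h1, hT, hκ.one, hκ'.one]
    · have h1 : l = r / (2 * C) := max_eq_right h.le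
      have hrpos : 0 < r := by
        by_contra hneg
        exact absurd (h1 ▸ hl0) (not_lt.2 (div_nonpos_of_nonpos_of_nonneg (not_lt.1 hneg) hR.le))
      have hgt : C < Real.sqrt (∑ j, (l⁻¹ • η) j ^ 2) := by
        rw [hr0, h1, div_div_cancel₀ hrpos.ne']
        linarith
      have := hb_hom y (hKU hy) (l⁻¹ • η) hgt l hl1
      rwa [smul_inv_smul₀ hl0.ne'] at this
  set b₀ := mderiv α β a (y, l⁻¹ • η)
  have hconj : (κ' (jap η)⁻¹).comp ((mderiv α β a (y, η)).comp (κ (jap η))) =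
      l ^ ν • (κ' t⁻¹).comp (b₀.comp (κ t)) := by
    have e' : κ' t⁻¹ = (κ' (jap η)⁻¹).comp (κ' l) := by
      rw [hκ'.mul _ _ (inv_pos.2 hj0) hl0, ht, inv_div, inv_mul_eq_div]
    have e : κ t = (κ l⁻¹).comp (κ (jap η)) := by
      rw [hκ.mul _ _ (inv_pos.2 hl0) hj0, ht, inv_mul_eq_div]
    rw [hscale, hT, e, e']
    ext h
    simp
  have hlt : l ^ ν = t ^ (-ν) * jap η ^ ν := by
    rw [ht, Real.rpow_neg ht0.le, Real.div_rpow hj0.le hl0.le]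
    have := (Real.rpow_pos_of_pos hj0 ν).ne'
    have := (Real.rpow_pos_of_pos hl0 ν).ne'
    field_simp
  have hjν : 0 ≤ jap η ^ ν := Real.rpow_nonneg hj0.le _
  have hDt : t ^ (-ν) ≤ |D| := (le_abs_self _).trans ((hD t htJ).trans (le_abs_self _))
  have hop : ‖(κ' t⁻¹).comp (b₀.comp (κ t))‖ ≤ |A'| * (|B| * |A|) := by
    refine (ContinuousLinearMap.opNorm_comp_le _ _).trans ?_
    gcongr
    · exact (hA' _ ⟨t, htJ, rfl⟩).trans (le_abs_self _)
    · refine (ContinuousLinearMap.opNorm_comp_le _ _).trans ?_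
      gcongr
      · exact (hB (y, l⁻¹ • η) ⟨hy, hη0⟩).trans (le_abs_self _)
      · exact (hA t htJ).trans (le_abs_self _)
  calc ‖(κ' (jap η)⁻¹).comp ((mderiv α β a (y, η)).comp (κ (jap η)))‖
      = t ^ (-ν) * jap η ^ ν * ‖(κ' t⁻¹).comp (b₀.comp (κ t))‖ := by
        rw [hconj, norm_smul, Real.norm_of_nonneg (Real.rpow_nonneg hl0.le _), hlt]
    _ ≤ |D| * jap η ^ ν * (|A'| * (|B| * |A|)) := by gcongr
    _ = |D| * (|A'| * (|B| * |A|)) * jap η ^ ν := by ring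
    _ ≤ (|D| * (|A'| * (|B| * |A|)) + 1) * jap η ^ ν := by gcongr; linarith
end

section
/- Let γ ∈ ℝ, let f : ℝ → ℂ be measurable with |f(ρ)| ≤ C(1+|ρ|)^M, let μ ∈ ℝ, j ∈ ℕ, α ∈ ℕ^q, and let ω, ω' be cut-off functions. For η ∈ ℝ^q with |η| ≥ 1 and u ∈ C_c^∞((0,∞)) define m(η)u(r) := r^{−μ+j} η^α ω(r|η|) · (op_M^γ(f)[ ω'(·|η|) u ])(r), where op_M^γ(f)w(r) := (2π)^{−1} ∫_ℝ r^{−(1/2−γ+iρ)} f(ρ) Mw(1/2−γ+iρ) dρ. Then for all λ ≥ 1, all η with |η| ≥ 1, all u ∈ C_c^∞((0,∞)) and all r > 0, m(λη)u(r) = λ^{μ−j+|α|} (κ_λ ∘ m(η) ∘ κ_λ^{−1}) u(r), where (κ_λ v)(r) := λ^{1/2} v(λ r). (This is the twisted homogeneity, for large |η|, of the smoothing Mellin edge symbols, in the case dim X = 0.) -/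
open MeasureTheory Set

/-- Dilation invariance of the integrand of a Mellin operator: the factors `a ^ z` and `a ^ (-z)`
produced by dilating the argument and the function cancel. -/
lemma cpow_neg_mul_mellin_comp_dilation {a r : ℝ} (ha : 0 < a) (hr : 0 < r) (z : ℂ)
    (w : ℝ → ℂ) :
    ((a * r : ℝ) : ℂ) ^ (-z) * mellin (fun s => w (a⁻¹ * s)) z = (r : ℂ) ^ (-z) * mellin w z := by
  have ha' : (a : ℂ) ≠ 0 := Complex.ofReal_ne_zero.mpr ha.ne'
  have hcancel : (a : ℂ) ^ (-z) * (a : ℂ) ^ z = 1 := by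
    rw [← Complex.cpow_add _ _ ha', neg_add_cancel, Complex.cpow_zero]
  have hinv : ((a⁻¹ : ℝ) : ℂ) ^ (-z) = (a : ℂ) ^ z := by
    rw [Complex.ofReal_inv, Complex.inv_cpow _ _ (by
      rw [Complex.arg_ofReal_of_nonneg ha.le]; exact Real.pi_pos.ne), Complex.cpow_neg, inv_inv]
  rw [mellin_comp_mul_left w z (inv_pos.mpr ha), hinv, Complex.ofReal_mul,
    Complex.mul_cpow_ofReal_nonneg ha.le hr.le, smul_eq_mul]
  linear_combination (r : ℂ) ^ (-z) * mellin w z * hcancel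

/-- The Euclidean length of a tuple is positively homogeneous. -/
lemma sqrt_sum_sq_smul_s15 {ι : Type*} [Fintype ι] {a : ℝ} (ha : 0 ≤ a) (η : ι → ℝ) :
    Real.sqrt (∑ i, (a • η) i ^ 2) = a * Real.sqrt (∑ i, η i ^ 2) := by
  simp only [Pi.smul_apply, smul_eq_mul, mul_pow, ← Finset.mul_sum]
  rw [Real.sqrt_mul (sq_nonneg a), Real.sqrt_sq ha]

/-- The monomial `η ^ α` is homogeneous of degree `|α|`. -/
lemma prod_smul_pow {ι : Type*} [Fintype ι] (a : ℝ) (η : ι → ℝ) (α : ι → ℕ) :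
    ∏ i, (((a • η) i : ℝ) : ℂ) ^ α i = (a : ℂ) ^ (∑ i, α i) * ∏ i, ((η i : ℝ) : ℂ) ^ α i := by
  simp only [Pi.smul_apply, smul_eq_mul, Complex.ofReal_mul, mul_pow, Finset.prod_mul_distrib,
    Finset.prod_pow_eq_pow_sum]

/-- Twisted homogeneity for large `|η|` of the smoothing Mellin edge symbols
(case `dim X = 0`): with
`m(η)u(r) = r^{-μ+j} η^α ω(r|η|) (op_M^γ(f)[ω'(·|η|)u])(r)` and
`(κ_λ v)(r) = λ^{1/2} v(λ r)`, one has
`m(λη)u(r) = λ^{μ-j+|α|} (κ_λ ∘ m(η) ∘ κ_λ^{-1}) u(r)` for all `λ ≥ 1` and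
`|η| ≥ 1`. -/
theorem smoothing_mellin_symbol_twisted_homogeneous
    (γ : ℝ) (f : ℝ → ℂ) (hf : Measurable f) (C M : ℝ)
    (hbd : ∀ ρ : ℝ, ‖f ρ‖ ≤ C * (1 + |ρ|) ^ M)
    (μ : ℝ) (j : ℕ) {q : ℕ} (α : Fin q → ℕ)
    (ω ω' : ℝ → ℝ)
    (hω : ContDiff ℝ (⊤ : ℕ∞) ω) (hωcs : HasCompactSupport ω)
    (hωone : ∀ᶠ r in nhds (0 : ℝ), ω r = 1)
    (hω' : ContDiff ℝ (⊤ : ℕ∞) ω') (hω'cs : HasCompactSupport ω')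
    (hω'one : ∀ᶠ r in nhds (0 : ℝ), ω' r = 1) :
    let en : (Fin q → ℝ) → ℝ := fun η => Real.sqrt (∑ i, η i ^ 2)
    let opM : (ℝ → ℂ) → ℝ → ℂ := fun w r => (2 * Real.pi)⁻¹ *
      ∫ ρ : ℝ, (r : ℂ) ^ (-((((1 : ℝ) / 2 - γ : ℝ) : ℂ) + ρ * Complex.I)) * f ρ *
        (∫ s in Ioi (0 : ℝ),
          (s : ℂ) ^ ((((1 : ℝ) / 2 - γ : ℝ) : ℂ) + ρ * Complex.I - 1) * w s)
    let m : (Fin q → ℝ) → (ℝ → ℂ) → ℝ → ℂ := fun η u r =>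
      ((r ^ (-μ + (j : ℝ)) : ℝ) : ℂ) * (∏ i, ((η i : ℝ) : ℂ) ^ α i) *
        ((ω (r * en η) : ℝ) : ℂ) * opM (fun s => ((ω' (s * en η) : ℝ) : ℂ) * u s) r
    ∀ lam : ℝ, 1 ≤ lam → ∀ η : Fin q → ℝ, 1 ≤ en η →
      ∀ u : ℝ → ℂ, ContDiff ℝ (⊤ : ℕ∞) u → HasCompactSupport u → tsupport u ⊆ Ioi (0 : ℝ) →
        ∀ r : ℝ, 0 < r →
          m (lam • η) u r
            = ((lam ^ (μ - (j : ℝ) + ∑ i, (α i : ℝ)) : ℝ) : ℂ) *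
                ((Real.sqrt lam : ℝ) : ℂ) *
                m η (fun s => (((Real.sqrt lam : ℝ) : ℂ))⁻¹ * u (lam⁻¹ * s)) (lam * r) := by
  intro en opM m lam hlam η _ u _ _ _ r hr
  have hlam0 : 0 < lam := zero_lt_one.trans_le hlam
  have hsqrt : ((Real.sqrt lam : ℝ) : ℂ) ≠ 0 :=
    Complex.ofReal_ne_zero.mpr (Real.sqrt_pos.mpr hlam0).ne'
  have hen : en (lam • η) = lam * en η := sqrt_sum_sq_smul_s15 hlam0.le η
  have hdil (w : ℝ → ℂ) (c : ℂ) :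
      opM (fun s => c * w (lam⁻¹ * s)) (lam * r) = c * opM w r := by
    simp only [opM]
    rw [mul_left_comm, ← integral_const_mul c]
    congr 2
    funext ρ
    have h := cpow_neg_mul_mellin_comp_dilation hlam0 hr
      ((((1 : ℝ) / 2 - γ : ℝ) : ℂ) + ρ * Complex.I) w
    simp only [mellin, smul_eq_mul] at h
    simp only [mul_left_comm _ c, integral_const_mul]
    linear_combination c * f ρ * h
  have hcut : (fun s => ((ω' (s * en η) : ℝ) : ℂ) *
        (((Real.sqrt lam : ℝ) : ℂ)⁻¹ * u (lam⁻¹ * s))) =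
      fun s => ((Real.sqrt lam : ℝ) : ℂ)⁻¹ *
        (fun t => ((ω' (t * en (lam • η)) : ℝ) : ℂ) * u t) (lam⁻¹ * s) := by
    funext s
    have hs : lam⁻¹ * s * en (lam • η) = s * en η := by
      rw [hen]; field_simp
    simp only [hs]
    ring
  have hpow : lam ^ (μ - (j : ℝ) + ∑ i, (α i : ℝ)) * (lam * r) ^ (-μ + (j : ℝ)) =
      lam ^ (∑ i, α i) * r ^ (-μ + (j : ℝ)) := by
    rw [Real.mul_rpow hlam0.le hr.le, ← mul_assoc, ← Real.rpow_add hlam0, ← Real.rpow_natCast]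
    congr 2
    push_cast
    ring
  have hpowC := congrArg (fun x : ℝ => (x : ℂ)) hpow
  simp only [Complex.ofReal_mul, Complex.ofReal_pow] at hpowC
  have harg : lam * r * en η = r * en (lam • η) := by rw [hen]; ring
  simp only [m]
  rw [hcut, hdil (fun t => ((ω' (t * en (lam • η)) : ℝ) : ℂ) * u t), harg, prod_smul_pow]
  generalize opM _ r = T
  have hcancel := mul_inv_cancel₀ hsqrt
  linear_combination (-(∏ i, ((η i : ℝ) : ℂ) ^ α i) * ((ω (r * en (lam • η)) : ℝ) : ℂ) * T) *
    (hpowC + ((lam ^ (μ - (j : ℝ) + ∑ i, (α i : ℝ)) : ℝ) : ℂ) *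
      (((lam * r) ^ (-μ + (j : ℝ)) : ℝ) : ℂ) * hcancel)
end
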